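/- arXiv:0908.0577 — 5 statements merged into one kernel-verified Lean document; each statement's English description precedes it below -/
import Mathlib

section
/- Let n ≥ 1, let (Ω, μ) be a measure space with 0 < μ(Ω) < ∞, and let B : Ω → Matrix (Fin n) (Fin n) ℂ be a matrix-valued function whose entries are integrable, such that: (i) B(x) is Hermitian for μ-a.e. x; (ii) every entry has zero mean, ∫_Ω B(x)_{ij} dμ(x) = 0 for all i, j; (iii) I + B(x) is positive definite for μ-a.e. x; and (iv) there is a real constant c ≥ 1 with det(I + B(x)) = c for μ-a.e. x. Then c = 1 and B(x) = 0 for μ-a.e. x. -/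
open MeasureTheory
open scoped ComplexOrder

theorem aux_det {n : ℕ} (B : Matrix (Fin n) (Fin n) ℂ) (h : (1 + B).PosDef) (c : ℝ)
    (hc : 1 ≤ c) (hdet : (1 + B).det = (c : ℂ)) :
    Real.log c ≤ B.trace.re ∧ (B.trace.re = 0 → B = 0) := by
  have hd := h.1.det_eq_prod_eigenvalues
  have ht := h.1.trace_eq_sum_eigenvalues
  have hp := h.eigenvalues_pos
  set l := h.1.eigenvalues with hl
  have hd' : c = ∏ i, l i := by
    rw [hdet] at hd
    rw [← RCLike.ofReal_prod] at hd
    exact Complex.ofReal_injective hd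
  have hlog : Real.log c = ∑ i, Real.log (l i) := by
    rw [hd', Real.log_prod (fun i _ => (hp i).ne')]
  have ht' : B.trace.re = ∑ i, (l i - 1) := by
    have := congrArg Complex.re ht
    simp [Matrix.trace_add, Matrix.trace_one] at this
    simp [Finset.sum_sub_distrib]
    linarith
  have hle : ∀ i, Real.log (l i) ≤ l i - 1 := fun i => Real.log_le_sub_one_of_pos (hp i)
  refine ⟨by rw [hlog, ht']; exact Finset.sum_le_sum fun i _ => hle i, fun h0 => ?_⟩
  have hlc := Real.log_nonneg hc
  have hs : ∑ i, (l i - 1 - Real.log (l i)) = 0 := by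
    apply le_antisymm
    · rw [Finset.sum_sub_distrib, ← ht', ← hlog]; linarith
    · exact Finset.sum_nonneg fun i _ => sub_nonneg.2 (hle i)
  rw [Finset.sum_eq_zero_iff_of_nonneg (fun i _ => sub_nonneg.2 (hle i))] at hs
  have h1 : ∀ i, l i = 1 := by
    intro i
    by_contra hne
    have := Real.log_lt_sub_one_of_pos (hp i) hne
    have := hs i (Finset.mem_univ i)
    linarith
  have hsp := h.1.spectral_theorem
  have : (RCLike.ofReal ∘ h.1.eigenvalues : Fin n → ℂ) = fun _ => 1 := by
    funext i
    have := h1 i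
    rw [hl] at this
    simp [this]
  rw [this, Matrix.diagonal_one, map_one] at hsp
  simpa using hsp

/-- If `B` is an a.e.-Hermitian integrable matrix-valued function on a finite measure
space with zero-mean entries, `I + B` a.e. positive definite, and `det (I + B) = c`
a.e. for a constant `c ≥ 1`, then `c = 1` and `B = 0` a.e. -/
theorem ae_eq_zero_of_det_one_add_eq_const
    {Ω : Type*} [MeasurableSpace Ω] (μ : Measure Ω)
    (hμ0 : 0 < μ Set.univ) (hμfin : μ Set.univ < ⊤)
    (n : ℕ) (hn : 1 ≤ n)
    (B : Ω → Matrix (Fin n) (Fin n) ℂ)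
    (hint : ∀ i j : Fin n, Integrable (fun x => B x i j) μ)
    (hherm : ∀ᵐ x ∂μ, (B x).IsHermitian)
    (hmean : ∀ i j : Fin n, ∫ x, B x i j ∂μ = 0)
    (hpos : ∀ᵐ x ∂μ, (1 + B x).PosDef)
    (c : ℝ) (hc : 1 ≤ c)
    (hdet : ∀ᵐ x ∂μ, (1 + B x).det = (c : ℂ)) :
    c = 1 ∧ ∀ᵐ x ∂μ, B x = 0 := by
  have haux : ∀ᵐ x ∂μ, Real.log c ≤ (B x).trace.re ∧ ((B x).trace.re = 0 → B x = 0) := by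
    filter_upwards [hpos, hdet] with x h1 h2 using aux_det (B x) h1 c hc h2
  have hlc := Real.log_nonneg hc
  have hI : Integrable (fun x => (B x).trace) μ :=
    integrable_finsetSum _ fun i _ => hint i i
  have hIr : Integrable (fun x => (B x).trace.re) μ := hI.re
  have hz : ∫ x, (B x).trace ∂μ = 0 := by
    simp only [Matrix.trace, Matrix.diag]
    rw [integral_finsetSum _ fun i _ => hint i i]
    exact Finset.sum_eq_zero fun i _ => hmean i i
  have hzr : ∫ x, (B x).trace.re ∂μ = 0 := by
    have := integral_re hI
    rw [hz] at this
    simpa using this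
  have h0 : ∀ᵐ x ∂μ, (B x).trace.re = 0 :=
    (integral_eq_zero_iff_of_nonneg_ae
      (by filter_upwards [haux] with x hx using hlc.trans hx.1) hIr).1 hzr
  constructor
  · have : NeZero μ := ⟨fun h => by simp [h] at hμ0⟩
    obtain ⟨x, hx, hx0⟩ := (haux.and h0).exists
    have h1 := hx.1
    rw [hx0] at h1
    by_contra hne
    have := Real.log_pos (lt_of_le_of_ne hc (Ne.symm hne))
    linarith
  · filter_upwards [haux, h0] with x hx hx0 using hx.2 hx0
end

section
/- Z(k) tends to +∞ as k tends to 1 from below; that is, the function Z diverges to +∞ along the filter of left-neighborhoods of 1 within [0,1). -/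
open MeasureTheory Real Filter

/-- `Z k = (1/(2π)) ∫₀^{2π} 1/(1 + k sin x) dx`. -/
noncomputable def Z (k : ℝ) : ℝ :=
  (1 / (2 * π)) * ∫ x in (0 : ℝ)..(2 * π), 1 / (1 + k * Real.sin x)

lemma Z_lower (k : ℝ) (h0 : 0 ≤ k) (h1 : k < 1) :
    (1 / (2 * π)) * ((4 / 3) * (√(1 - k))⁻¹) ≤ Z k := by
  unfold Z
  have hpi := Real.pi_gt_three
  refine mul_le_mul_of_nonneg_left ?_ (by positivity)
  set s := √(1 - k) with hs
  have hs0 : 0 < s := Real.sqrt_pos.mpr (by linarith)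
  have hs2 : s ^ 2 = 1 - k := Real.sq_sqrt (by linarith)
  have hs1 : s ≤ 1 := by nlinarith
  have hpos : ∀ x, 0 < 1 + k * Real.sin x := fun x => by
    nlinarith [Real.neg_one_le_sin x]
  have hcont : Continuous fun x => 1 / (1 + k * Real.sin x) :=
    continuous_const.div (by fun_prop) (fun x => (hpos x).ne')
  set c := 3 * π / 2 with hc
  have hsub : ∫ x in (c - s)..(c + s), 1 / (1 + k * Real.sin x)
      ≤ ∫ x in (0 : ℝ)..(2 * π), 1 / (1 + k * Real.sin x) :=
    intervalIntegral.integral_mono_interval (by linarith) (by linarith) (by linarith)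
      (Eventually.of_forall fun x => (one_div_pos.mpr (hpos x)).le)
      (hcont.intervalIntegrable _ _)
  refine le_trans ?_ hsub
  have hmono : ∫ x in (c - s)..(c + s), (2 / (3 * s ^ 2) : ℝ)
      ≤ ∫ x in (c - s)..(c + s), 1 / (1 + k * Real.sin x) := by
    refine intervalIntegral.integral_mono_on (by linarith) (by simp)
      (hcont.intervalIntegrable _ _) ?_
    intro x hx
    have hsin : Real.sin x = - Real.cos (x - c) := by
      have : x = (x - c) + π + π / 2 := by rw [hc]; ring
      conv_lhs => rw [this]
      rw [Real.sin_add_pi_div_two, Real.cos_add_pi]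
    have hcos := Real.one_sub_sq_div_two_le_cos (x := x - c)
    have hsq : (x - c) ^ 2 ≤ s ^ 2 := by
      apply sq_le_sq'
      · linarith [hx.1]
      · linarith [hx.2]
    rw [div_le_div_iff₀ (by positivity) (hpos x), hsin]
    nlinarith
  refine le_trans (le_of_eq ?_) hmono
  rw [intervalIntegral.integral_const, smul_eq_mul]
  field_simp
  ring

/-- `Z k → +∞` as `k → 1⁻` within `[0,1)`. -/
theorem Z_tendsto_atTop :
    Tendsto Z (nhdsWithin 1 (Set.Ico (0 : ℝ) 1)) atTop := by
  have hlim : Tendsto (fun k : ℝ => (1 / (2 * π)) * ((4 / 3) * (√(1 - k))⁻¹))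
      (nhdsWithin 1 (Set.Ico (0 : ℝ) 1)) atTop := by
    refine Tendsto.const_mul_atTop (by positivity) (Tendsto.const_mul_atTop (by norm_num) ?_)
    refine Tendsto.comp tendsto_inv_nhdsGT_zero ?_
    refine tendsto_nhdsWithin_iff.mpr ⟨?_, ?_⟩
    · have : Continuous fun k : ℝ => √(1 - k) := by fun_prop
      have h := this.tendsto 1
      simp only [sub_self, Real.sqrt_zero] at h
      exact h.mono_left nhdsWithin_le_nhds
    · filter_upwards [self_mem_nhdsWithin] with k hk
      exact Real.sqrt_pos.mpr (by linarith [hk.2])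
  refine tendsto_atTop_mono' _ ?_ hlim
  filter_upwards [self_mem_nhdsWithin] with k hk
  exact Z_lower k hk.1 hk.2
end

section
/- For every δ with 0 < δ < 1 there exist a real number k with 0 < k < 1 and a smooth (C^∞) 2π-periodic function u : ℝ → ℝ such that 1 + u″(x)/4 > 0 and (1 + u″(x)/4)·(1 + k sin x) = δ for every x ∈ ℝ. -/
open Real

/-- For every `0 < δ < 1` there exist `0 < k < 1` and a smooth `2π`-periodic
function `u : ℝ → ℝ` with `1 + u″/4 > 0` and `(1 + u″/4)(1 + k sin x) = δ`. -/
theorem exists_smooth_periodic_solution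
    (δ : ℝ) (hδ0 : 0 < δ) (hδ1 : δ < 1) :
    ∃ (k : ℝ) (u : ℝ → ℝ), 0 < k ∧ k < 1 ∧
      Function.Periodic u (2 * π) ∧ ContDiff ℝ (⊤ : ℕ∞) u ∧
      ∀ x : ℝ, 0 < 1 + deriv (deriv u) x / 4 ∧
        (1 + deriv (deriv u) x / 4) * (1 + k * Real.sin x) = δ := by
  obtain ⟨r, hr0, hr1, hrδ⟩ : ∃ r : ℝ, 0 < r ∧ r < 1 ∧ δ = (1 - r ^ 2) / (1 + r ^ 2) := by
    have hq : 0 < (1 - δ) / (1 + δ) := div_pos (by linarith) (by linarith)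
    have hs := Real.sq_sqrt hq.le
    have hp := Real.sqrt_pos.2 hq
    refine ⟨√((1 - δ) / (1 + δ)), hp, ?_, ?_⟩
    · rw [Real.sqrt_lt' one_pos, div_lt_iff₀ (by linarith)]
      linarith
    · rw [hs]
      have : (1 + δ) ≠ 0 := by linarith
      field_simp
      ring
  have hpos : ∀ x, 0 < 1 + r * Real.sin x := fun x => by
    nlinarith [Real.neg_one_le_sin x]
  have hD : ∀ x, 0 < 1 + 2 * r * Real.sin x + r ^ 2 := fun x => by
    nlinarith [Real.neg_one_le_sin x, sq_pos_of_pos (sub_pos.2 hr1)]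
  set w : ℝ → ℝ := fun x => 8 * Real.arctan (r * Real.cos x / (1 + r * Real.sin x)) with hw
  have hwd : ContDiff ℝ (⊤ : ℕ∞) w := by
    refine contDiff_const.mul (Real.contDiff_arctan.comp ?_)
    exact (contDiff_const.mul Real.contDiff_cos).div
      (contDiff_const.add (contDiff_const.mul Real.contDiff_sin)) (fun x => (hpos x).ne')
  have hwc : Continuous w := hwd.continuous
  have hwder : ∀ x, HasDerivAt w
      (-8 * (r * Real.sin x + r ^ 2) / (1 + 2 * r * Real.sin x + r ^ 2)) x := fun x => by
    have h1 := (((Real.hasDerivAt_cos x).const_mul r).div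
      (((Real.hasDerivAt_sin x).const_mul r).const_add 1) (hpos x).ne').arctan.const_mul 8
    refine HasDerivAt.congr_deriv (f := w) h1 ?_
    have h2 := (hpos x).ne'
    have h3 := (hD x).ne'
    have hc : Real.cos x ^ 2 = 1 - Real.sin x ^ 2 := by
      linarith [Real.sin_sq_add_cos_sq x]
    have h5 : 1 + (r * Real.cos x / (1 + r * Real.sin x)) ^ 2
        = (1 + 2 * r * Real.sin x + r ^ 2) / (1 + r * Real.sin x) ^ 2 := by
      field_simp
      rw [hc]; ring
    simp only [Pi.div_apply]
    rw [h5]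
    generalize hDD : 1 + 2 * r * Real.sin x + r ^ 2 = D at h3 ⊢
    field_simp
    linear_combination (-r) * hc
  have hwp : Function.Periodic w (2 * π) := fun x => by
    simp [hw]
  have hint : ∀ a b, IntervalIntegrable w MeasureTheory.volume a b :=
    fun a b => hwc.intervalIntegrable a b
  have hI : ∫ x in (0:ℝ)..(0 + 2 * π), w x = 0 := by
    have h1 : ∫ x in (0:ℝ)..(2 * π), w (π - x) = ∫ x in (π - 2 * π)..(π - 0), w x :=
      intervalIntegral.integral_comp_sub_left w π
    have h2 : ∀ x, w (π - x) = - w x := fun x => by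
      simp [hw, neg_div, Real.arctan_neg]
    simp only [h2, intervalIntegral.integral_neg] at h1
    have h3 := hwp.intervalIntegral_add_eq 0 (π - 2 * π)
    have e : π - 2 * π + 2 * π = π - 0 := by ring
    rw [e, ← h1, zero_add] at h3
    rw [zero_add]
    linarith
  set u : ℝ → ℝ := fun x => ∫ t in (0:ℝ)..x, w t with hu
  have hud : ∀ x, HasDerivAt u (w x) x := fun x => hwc.integral_hasStrictDerivAt 0 x |>.hasDerivAt
  have hdu : deriv u = w := funext fun x => (hud x).deriv
  have h1r : (1 + r ^ 2) ≠ 0 := by positivity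
  refine ⟨2 * r / (1 + r ^ 2), u, by positivity, ?_, ?_, ?_, ?_⟩
  · rw [div_lt_one (by positivity)]
    nlinarith [sq_pos_of_pos (sub_pos.2 hr1)]
  · intro x
    have h := hwp.intervalIntegral_add_eq 0 x
    have h' := intervalIntegral.integral_add_adjacent_intervals (hint 0 x) (hint x (x + 2 * π))
    simp only [hu]
    linarith
  · rw [contDiff_infty_iff_deriv, hdu]
    exact ⟨fun x => (hud x).differentiableAt, hwd⟩
  · intro x
    have h3 := (hD x).ne'
    have key : 1 + deriv (deriv u) x / 4 = (1 - r ^ 2) / (1 + 2 * r * Real.sin x + r ^ 2) := by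
      rw [hdu, (hwder x).deriv]
      generalize hDD : 1 + 2 * r * Real.sin x + r ^ 2 = D at h3 ⊢
      field_simp
      linear_combination -4 * hDD
    rw [key]
    refine ⟨div_pos (by nlinarith) (hD x), ?_⟩
    rw [hrδ]
    generalize hDD : 1 + 2 * r * Real.sin x + r ^ 2 = D at h3 ⊢
    field_simp
    linear_combination (1 - r ^ 2) * hDD
end

section
/- For every δ with 0 < δ < 1 there exist smooth (C^∞) 2π-periodic functions u, v : ℝ → ℝ such that 1 + u″(x)/4 > 0, 1 + v″(x)/4 > 0, and (1 + u″(x)/4)·(1 + v″(x)/4) = δ for every x ∈ ℝ. -/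
open Real

theorem exists_smooth_periodic_pair_solution
    (δ : ℝ) (hδ0 : 0 < δ) (hδ1 : δ < 1) :
    ∃ u v : ℝ → ℝ,
      Function.Periodic u (2 * π) ∧ ContDiff ℝ (⊤ : ℕ∞) u ∧
      Function.Periodic v (2 * π) ∧ ContDiff ℝ (⊤ : ℕ∞) v ∧
      ∀ x : ℝ, 0 < 1 + deriv (deriv u) x / 4 ∧ 0 < 1 + deriv (deriv v) x / 4 ∧
        (1 + deriv (deriv u) x / 4) * (1 + deriv (deriv v) x / 4) = δ := by
  obtain ⟨r, hr0, hr1, hr⟩ : ∃ r : ℝ, 0 < r ∧ r < 1 ∧ δ = (1 - r ^ 2) / (1 + r ^ 2) := by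
    have h0 : 0 < (1 - δ) / (1 + δ) := div_pos (by linarith) (by linarith)
    have hs := Real.sq_sqrt h0.le
    refine ⟨√((1 - δ) / (1 + δ)), Real.sqrt_pos.2 h0, ?_, ?_⟩
    · rw [Real.sqrt_lt' one_pos, div_lt_iff₀ (by linarith)]
      linarith
    · rw [hs]
      have : 1 + δ ≠ 0 := by linarith
      field_simp
      ring
  have hc : ∀ x : ℝ, 0 < 1 + r * cos x := fun x => by
    nlinarith [neg_one_le_cos x]
  have hq : ∀ x : ℝ, 0 < 1 + r ^ 2 + r * 2 * cos x := fun x => by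
    nlinarith [neg_one_le_cos x, sq_nonneg (1 - r), mul_pos (sub_pos.2 hr1) (sub_pos.2 hr1)]
  set g : ℝ → ℝ := fun x => -8 * arctan (r * sin x / (1 + r * cos x)) with hg
  have hgs : ContDiff ℝ (⊤ : ℕ∞) g := by
    refine contDiff_const.mul (ContDiff.arctan (ContDiff.div ?_ ?_ fun x => (hc x).ne'))
    · exact contDiff_const.mul contDiff_sin
    · exact contDiff_const.add (contDiff_const.mul contDiff_cos)
  have hgc : Continuous g := hgs.continuous
  have hgp : Function.Periodic g (2 * π) := fun x => by simp [hg]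
  have hgo : ∀ x, g (-x) = - g x := fun x => by
    simp [hg, neg_div, arctan_neg]
  have hg0 : ∫ x in (-π)..π, g x = 0 := by
    have h := intervalIntegral.integral_comp_neg (a := -π) (b := π) g
    simp only [hgo, intervalIntegral.integral_neg, neg_neg] at h
    linarith
  have hgd : ∀ x, HasDerivAt g (-8 * ((r * cos x + r ^ 2) / (1 + r ^ 2 + r * 2 * cos x))) x := by
    intro x
    have h1 := (((hasDerivAt_sin x).const_mul r).div
      (((hasDerivAt_cos x).const_mul r).const_add 1) (hc x).ne').arctan.const_mul (-8)
    refine HasDerivAt.congr_deriv (f := g) h1 ?_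
    have hcx := (hc x).ne'
    have hqx := (hq x).ne'
    have hsc := sin_sq_add_cos_sq x
    have e1 : 1 + (r * sin x / (1 + r * cos x)) ^ 2
        = (1 + r ^ 2 + r * 2 * cos x) / (1 + r * cos x) ^ 2 := by
      field_simp
      linear_combination r ^ 2 * hsc
    change -8 * (1 / (1 + (r * sin x / (1 + r * cos x)) ^ 2) * _) = _
    rw [e1]
    field_simp
    linear_combination (-r) * hsc
  have hvd : ∀ x, HasDerivAt (fun x => ∫ t in (0:ℝ)..x, g t) (g x) x := fun x =>
    intervalIntegral.integral_hasDerivAt_right (hgc.intervalIntegrable _ _)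
      hgc.aestronglyMeasurable.stronglyMeasurableAtFilter hgc.continuousAt
  have hvd' : deriv (fun x => ∫ t in (0:ℝ)..x, g t) = g := funext fun x => (hvd x).deriv
  have hud : deriv (fun x => (-8 * r / (1 + r ^ 2)) * cos x)
      = fun x => (-8 * r / (1 + r ^ 2)) * (-sin x) :=
    funext fun x => ((hasDerivAt_cos x).const_mul _).deriv
  refine ⟨fun x => (-8 * r / (1 + r ^ 2)) * cos x, fun x => ∫ t in (0:ℝ)..x, g t,
    fun x => by simp, contDiff_const.mul contDiff_cos, fun x => ?_, ?_, fun x => ?_⟩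
  · have h := hgp.intervalIntegral_add_eq x (-π)
    rw [show -π + 2 * π = π by ring, hg0] at h
    have h2 := intervalIntegral.integral_add_adjacent_intervals
      (hgc.intervalIntegrable 0 x) (hgc.intervalIntegrable (μ := MeasureTheory.volume) x (x + 2 * π))
    simp only
    linarith
  · rw [contDiff_infty_iff_deriv, hvd']
    exact ⟨fun x => (hvd x).differentiableAt, hgs⟩
  · have hu2 : deriv (fun x => (-8 * r / (1 + r ^ 2)) * (-sin x)) x
        = (-8 * r / (1 + r ^ 2)) * (-cos x) := ((hasDerivAt_sin x).neg.const_mul _).deriv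
    rw [hvd', hud, (hgd x).deriv, hu2]
    have hqx := hq x
    have hr2 : 0 < 1 + r ^ 2 := by positivity
    have e1 : 1 + -8 * r / (1 + r ^ 2) * -cos x / 4
        = (1 + r ^ 2 + r * 2 * cos x) / (1 + r ^ 2) := by
      field_simp
      ring
    have e2 : 1 + -8 * ((r * cos x + r ^ 2) / (1 + r ^ 2 + r * 2 * cos x)) / 4
        = (1 - r ^ 2) / (1 + r ^ 2 + r * 2 * cos x) := by
      rw [eq_div_iff hqx.ne', add_mul, div_mul_eq_mul_div, mul_assoc (-8), div_mul_cancel₀ _ hqx.ne']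
      ring
    rw [e1, e2, hr]
    refine ⟨by positivity, div_pos (by nlinarith) hqx, ?_⟩
    field_simp
end

section
/- Let n ≥ 1, let (Ω, μ) be a measure space with 0 < μ(Ω) < ∞, and let H : Ω → Matrix (Fin n) (Fin n) ℂ be a matrix-valued function whose entries are integrable, such that: (i) H(x) is Hermitian for μ-a.e. x; (ii) I + H(x) is positive definite for μ-a.e. x; (iii) there is a real constant c ≥ 1 with det(I + H(x)) = c for μ-a.e. x; and (iv) the trace has zero mean, ∫_Ω trace H(x) dμ(x) = 0. Then c = 1 and H(x) = 0 for μ-a.e. x. -/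
open MeasureTheory
open scoped ComplexOrder

lemma aux_matrix {n : ℕ} (A : Matrix (Fin n) (Fin n) ℂ) (hA : A.PosDef) (c : ℝ)
    (hdet : A.det = (c : ℂ)) :
    Real.log c ≤ A.trace.re - n ∧ (A.trace.re - n = Real.log c → A = 1) := by
  have hl : ∀ i, 0 < hA.1.eigenvalues i := hA.eigenvalues_pos
  have hprod : c = ∏ i, hA.1.eigenvalues i := by
    have h := hA.1.det_eq_prod_eigenvalues
    rw [hdet] at h
    apply Complex.ofReal_injective
    rw [h]; push_cast; rfl
  have hlog : Real.log c = ∑ i, Real.log (hA.1.eigenvalues i) := by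
    rw [hprod, Real.log_prod (fun i _ => (hl i).ne')]
  have htr : A.trace.re - n = ∑ i, (hA.1.eigenvalues i - 1) := by
    have h := hA.1.trace_eq_sum_eigenvalues
    rw [h]; simp
  have hle : ∀ i ∈ Finset.univ, Real.log (hA.1.eigenvalues i) ≤ hA.1.eigenvalues i - 1 :=
    fun i _ => Real.log_le_sub_one_of_pos (hl i)
  rw [hlog, htr]
  refine ⟨Finset.sum_le_sum hle, fun h => ?_⟩
  have h1 := (Finset.sum_eq_sum_iff_of_le hle).1 h.symm
  have h2 : hA.1.eigenvalues = fun _ => 1 := by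
    funext i
    by_contra hne
    exact (Real.log_lt_sub_one_of_pos (hl i) hne).ne (h1 i (Finset.mem_univ i))
  have h3 := hA.1.spectral_theorem
  have h4 : Matrix.diagonal ((RCLike.ofReal : ℝ → ℂ) ∘ hA.1.eigenvalues) = 1 := by
    rw [h2]; ext i j; simp [Matrix.diagonal_apply, Matrix.one_apply]
  rw [h4, map_one] at h3
  exact h3

/-- If `H` is an a.e.-Hermitian integrable matrix-valued function on a finite
measure space with `I + H` a.e. positive definite, `det (I + H) = c` a.e. for a
constant `c ≥ 1`, and `∫ trace H dμ = 0`, then `c = 1` and `H = 0` a.e. -/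
theorem ae_eq_zero_of_det_one_add_eq_const_of_trace_mean_zero
    {Ω : Type*} [MeasurableSpace Ω] (μ : Measure Ω)
    (hμ0 : 0 < μ Set.univ) (hμfin : μ Set.univ < ⊤)
    (n : ℕ) (hn : 1 ≤ n)
    (H : Ω → Matrix (Fin n) (Fin n) ℂ)
    (hint : ∀ i j : Fin n, Integrable (fun x => H x i j) μ)
    (hherm : ∀ᵐ x ∂μ, (H x).IsHermitian)
    (hpos : ∀ᵐ x ∂μ, (1 + H x).PosDef)
    (c : ℝ) (hc : 1 ≤ c)
    (hdet : ∀ᵐ x ∂μ, (1 + H x).det = (c : ℂ))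
    (htrace : ∫ x, (H x).trace ∂μ = 0) :
    c = 1 ∧ ∀ᵐ x ∂μ, H x = 0 := by
  have hti : Integrable (fun x => (H x).trace) μ := by
    simp only [Matrix.trace, Matrix.diag]
    exact integrable_finsetSum _ (fun i _ => hint i i)
  have hre : ∫ x, (H x).trace.re ∂μ = 0 := by
    have h := integral_re hti
    rw [htrace] at h
    simpa using h
  have htri : Integrable (fun x => (H x).trace.re) μ := hti.re
  have key : ∀ᵐ x ∂μ, Real.log c ≤ (H x).trace.re ∧
      ((H x).trace.re = Real.log c → H x = 0) := by
    filter_upwards [hpos, hdet] with x h1 h2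
    have h := aux_matrix _ h1 c h2
    have e : (1 + H x).trace.re - n = (H x).trace.re := by simp [Matrix.trace_add]
    rw [e] at h
    exact ⟨h.1, fun h' => by simpa using h.2 h'⟩
  have hlc : 0 ≤ Real.log c := Real.log_nonneg hc
  have hz : (fun x => (H x).trace.re) =ᵐ[μ] 0 := by
    refine (integral_eq_zero_iff_of_nonneg_ae ?_ htri).1 hre
    filter_upwards [key] with x hx
    exact hlc.trans hx.1
  have : NeZero μ := ⟨fun h => by simp [h] at hμ0⟩
  have hl0 : Real.log c = 0 := by
    obtain ⟨x, hx, hx'⟩ := (key.and hz).exists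
    exact le_antisymm (hx.1.trans_eq hx') hlc
  refine ⟨Real.eq_one_of_pos_of_log_eq_zero (by linarith) hl0, ?_⟩
  filter_upwards [key, hz] with x hx hx'
  exact hx.2 (by rw [hl0]; exact hx')
end
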